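/- arXiv:2004.00572 — 2 statements merged into one kernel-verified Lean document; each statement's English description precedes it below -/
import Mathlib

section
/- Let I be a finite set. The assignments given, for γ ∈ Γ and i ∈ I (letting γ_i ∈ Γ^I denote the element with entry γ in slot i and 0 elsewhere), by γ_i · t_{0p} = t_{0p} for all p ∈ I, γ_i · t_{qr}^α = t_{qr}^α for q, r ≠ i, γ_i · t_{ir}^α = t_{ir}^{α+γ} for r ≠ i, and γ_i · t_{qi}^α = t_{qi}^{α−γ} for q ≠ i, define an action of the group Γ^I on t_I^Γ(k) by Lie algebra automorphisms, i.e., a group homomorphism from Γ^I to the group of Lie algebra automorphisms of t_I^Γ(k). -/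
/-!
STATEMENT 5: the group `Γ^I` acts on `t_I^Γ(k)` by Lie algebra automorphisms, with the
prescribed values on generators.
-/

noncomputable section

abbrev CycGen (I : Type) (N : ℕ) : Type :=
  I ⊕ ({p : I × I // p.1 ≠ p.2} × ZMod N)

namespace Cyc

variable (K : Type) [CommRing K] (I : Type) (N : ℕ)

def g0 (i : I) : FreeLieAlgebra K (CycGen I N) :=
  FreeLieAlgebra.of K (Sum.inl i)

def g (i j : I) (h : i ≠ j) (α : ZMod N) : FreeLieAlgebra K (CycGen I N) :=
  FreeLieAlgebra.of K (Sum.inr (⟨(i, j), h⟩, α))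

def rels [NeZero N] : Set (FreeLieAlgebra K (CycGen I N)) :=
  {x |
    (∃ (i j : I) (h : i ≠ j) (α : ZMod N),
        x = g K I N i j h α - g K I N j i h.symm (-α)) ∨
    (∃ (i j l : I) (h : j ≠ l) (_ : i ≠ j) (_ : i ≠ l) (α : ZMod N),
        x = ⁅g0 K I N i, g K I N j l h α⁆) ∨
    (∃ (i j l m : I) (hij : i ≠ j) (hlm : l ≠ m)
        (_ : i ≠ l) (_ : i ≠ m) (_ : j ≠ l) (_ : j ≠ m) (α β : ZMod N),
        x = ⁅g K I N i j hij α, g K I N l m hlm β⁆) ∨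
    (∃ (i j l : I) (hij : i ≠ j) (hil : i ≠ l) (hjl : j ≠ l) (α β : ZMod N),
        x = ⁅g K I N i j hij α, g K I N i l hil (α + β) + g K I N j l hjl β⁆) ∨
    (∃ (i j : I) (hij : i ≠ j),
        x = ⁅g0 K I N i, g0 K I N j + ∑ α : ZMod N, g K I N i j hij α⁆) ∨
    (∃ (i j : I) (hij : i ≠ j) (α : ZMod N),
        x = ⁅g0 K I N i + g0 K I N j + ∑ β : ZMod N, g K I N i j hij β,
              g K I N i j hij α⁆)}

abbrev tGamma [NeZero N] : Type :=
  FreeLieAlgebra K (CycGen I N) ⧸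
    LieSubmodule.lieSpan K (FreeLieAlgebra K (CycGen I N)) (rels K I N)

def T0 [NeZero N] (i : I) : tGamma K I N :=
  LieSubmodule.Quotient.mk (N := LieSubmodule.lieSpan K _ (rels K I N)) (g0 K I N i)

def T [NeZero N] [DecidableEq I] (i j : I) (α : ZMod N) : tGamma K I N :=
  if h : i ≠ j then
    LieSubmodule.Quotient.mk (N := LieSubmodule.lieSpan K _ (rels K I N)) (g K I N i j h α)
  else 0

end Cyc


/-!
For `a : I → ZMod N`, let `Cyc.shift a` be the endomorphism of the free Lie algebra which fixes every
`t_{0p}` and sends `t_{ij}^α` to `t_{ij}^{α + a_i - a_j}`. The defining relations are permuted by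
`Cyc.shift a` (`Cyc.shift_mem_rels`): the displacements `a_i - a_j` are antisymmetric, which gives
(tS), and additive along `i, j, l`, which gives (t4T), while a sum over all of `Γ` is unchanged by a
translation of its index, which gives the relations involving `∑ α, t_{ij}^α`. Hence `Cyc.shift a`
descends to the quotient (`Cyc.shiftQuot`). Since `a ↦ a_i - a_j` is additive,
`a ↦ Cyc.shift a` turns sums into compositions, so that `shift (-a)` inverts `shift a` and the
descended maps form an action. Taking `a = Pi.single i γ` gives the prescribed values.
-/

namespace Cyc

variable {K : Type} [CommRing K] {I : Type} {N : ℕ}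

/-- The endomorphism of the free Lie algebra with `t_{0p} ↦ t_{0p}` and
`t_{ij}^α ↦ t_{ij}^{α + a_i - a_j}`. -/
def shift (a : I → ZMod N) :
    FreeLieAlgebra K (CycGen I N) →ₗ⁅K⁆ FreeLieAlgebra K (CycGen I N) :=
  FreeLieAlgebra.lift K fun x => FreeLieAlgebra.of K <|
    x.map id fun p => (p.1, p.2 + (a p.1.1.1 - a p.1.1.2))

@[simp]
theorem shift_g0 (a : I → ZMod N) (i : I) : shift a (g0 K I N i) = g0 K I N i := by
  simp [shift, g0]

@[simp]
theorem shift_g (a : I → ZMod N) (i j : I) (h : i ≠ j) (α : ZMod N) :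
    shift a (g K I N i j h α) = g K I N i j h (α + (a i - a j)) := by
  simp [shift, g]

theorem shift_zero (x : FreeLieAlgebra K (CycGen I N)) : shift 0 x = x := by
  have : shift (K := K) (0 : I → ZMod N) = LieHom.id := by
    ext x
    rcases x with i | ⟨p, α⟩ <;> simp [shift]
  simp [this]

theorem shift_add (a b : I → ZMod N) (x : FreeLieAlgebra K (CycGen I N)) :
    shift (a + b) x = shift a (shift b x) := by
  have : shift (K := K) (a + b) = (shift a).comp (shift b) := by
    ext x
    rcases x with i | ⟨p, α⟩
    · simp [shift]
    · simp only [shift, FreeLieAlgebra.lift_of_apply, LieHom.comp_apply, Sum.map_inr, Pi.add_apply]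
      congr 3
      ring
  simp [this]

variable [NeZero N]

/-- A sum over all of `Γ` is invariant under translation of the upper index. -/
theorem shift_sum_g (a : I → ZMod N) (i j : I) (h : i ≠ j) :
    shift a (∑ α : ZMod N, g K I N i j h α) = ∑ α : ZMod N, g K I N i j h α := by
  rw [map_sum]
  simp only [shift_g]
  exact Equiv.sum_comp (Equiv.addRight (a i - a j)) fun α => g K I N i j h α

theorem shift_mem_rels (a : I → ZMod N) {x : FreeLieAlgebra K (CycGen I N)}
    (hx : x ∈ rels K I N) : shift a x ∈ rels K I N := by
  rcases hx with ⟨i, j, h, α, rfl⟩ | ⟨i, j, l, h, hij, hil, α, rfl⟩ |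
    ⟨i, j, l, m, hij, hlm, h1, h2, h3, h4, α, β, rfl⟩ | ⟨i, j, l, hij, hil, hjl, α, β, rfl⟩ |
    ⟨i, j, hij, rfl⟩ | ⟨i, j, hij, α, rfl⟩
  · refine Or.inl ⟨i, j, h, α + (a i - a j), ?_⟩
    rw [map_sub, shift_g, shift_g]
    congr 2
    ring
  · refine Or.inr <| Or.inl ⟨i, j, l, h, hij, hil, α + (a j - a l), ?_⟩
    rw [LieHom.map_lie, shift_g0, shift_g]
  · refine Or.inr <| Or.inr <| Or.inl ⟨i, j, l, m, hij, hlm, h1, h2, h3, h4,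
      α + (a i - a j), β + (a l - a m), ?_⟩
    rw [LieHom.map_lie, shift_g, shift_g]
  · refine Or.inr <| Or.inr <| Or.inr <| Or.inl ⟨i, j, l, hij, hil, hjl,
      α + (a i - a j), β + (a j - a l), ?_⟩
    rw [LieHom.map_lie, map_add, shift_g, shift_g, shift_g]
    congr 3
    ring
  · refine Or.inr <| Or.inr <| Or.inr <| Or.inr <| Or.inl ⟨i, j, hij, ?_⟩
    rw [LieHom.map_lie, map_add, shift_g0, shift_g0, shift_sum_g]
  · refine Or.inr <| Or.inr <| Or.inr <| Or.inr <| Or.inr ⟨i, j, hij, α + (a i - a j), ?_⟩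
    rw [LieHom.map_lie, map_add, map_add, shift_g0, shift_g0, shift_sum_g, shift_g]

variable (K I N) in
/-- The Lie ideal of relations defining `t_I^Γ`. -/
abbrev relIdeal : LieIdeal K (FreeLieAlgebra K (CycGen I N)) :=
  LieSubmodule.lieSpan K (FreeLieAlgebra K (CycGen I N)) (rels K I N)

theorem relIdeal_le_comap_shift (a : I → ZMod N) :
    relIdeal K I N ≤ (relIdeal K I N).comap (shift a) :=
  LieSubmodule.lieSpan_le.mpr fun _ hx =>
    LieIdeal.mem_comap.mpr (LieSubmodule.subset_lieSpan (shift_mem_rels a hx))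

/-- The endomorphism of `t_I^Γ` induced by `shift a`. -/
def shiftQuot (a : I → ZMod N) : tGamma K I N →ₗ⁅K⁆ tGamma K I N :=
  { Submodule.mapQ (relIdeal K I N).toSubmodule (relIdeal K I N).toSubmodule
      (shift (K := K) a).toLinearMap
      (fun _ hx => LieIdeal.mem_comap.mp (relIdeal_le_comap_shift a hx)) with
    map_lie' := by
      intro x y
      obtain ⟨x, rfl⟩ := LieSubmodule.Quotient.surjective_mk' (relIdeal K I N) x
      obtain ⟨y, rfl⟩ := LieSubmodule.Quotient.surjective_mk' (relIdeal K I N) y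
      exact congrArg (LieSubmodule.Quotient.mk (N := relIdeal K I N)) ((shift a).map_lie x y) }

theorem shiftQuot_mk (a : I → ZMod N) (x : FreeLieAlgebra K (CycGen I N)) :
    shiftQuot a (LieSubmodule.Quotient.mk (N := relIdeal K I N) x) =
      LieSubmodule.Quotient.mk (N := relIdeal K I N) (shift a x) :=
  rfl

theorem shiftQuot_zero (x : tGamma K I N) : shiftQuot 0 x = x := by
  obtain ⟨x, rfl⟩ := LieSubmodule.Quotient.surjective_mk' (relIdeal K I N) x
  exact congrArg (LieSubmodule.Quotient.mk (N := relIdeal K I N)) (shift_zero x)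

theorem shiftQuot_add (a b : I → ZMod N) (x : tGamma K I N) :
    shiftQuot (a + b) x = shiftQuot a (shiftQuot b x) := by
  obtain ⟨x, rfl⟩ := LieSubmodule.Quotient.surjective_mk' (relIdeal K I N) x
  exact congrArg (LieSubmodule.Quotient.mk (N := relIdeal K I N)) (shift_add a b x)

/-- The automorphism of `t_I^Γ` induced by `shift a`; its inverse is induced by `shift (-a)`. -/
def shiftEquiv (a : I → ZMod N) : tGamma K I N ≃ₗ⁅K⁆ tGamma K I N :=
  { shiftQuot a with
    invFun := shiftQuot (-a)
    left_inv := fun x => by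
      change shiftQuot (-a) (shiftQuot a x) = x
      rw [← shiftQuot_add, neg_add_cancel, shiftQuot_zero]
    right_inv := fun x => by
      change shiftQuot a (shiftQuot (-a) x) = x
      rw [← shiftQuot_add, add_neg_cancel, shiftQuot_zero] }

theorem shiftEquiv_apply (a : I → ZMod N) (x : tGamma K I N) : shiftEquiv a x = shiftQuot a x :=
  rfl

theorem shiftEquiv_T0 (a : I → ZMod N) (p : I) : shiftEquiv a (T0 K I N p) = T0 K I N p := by
  rw [shiftEquiv_apply, T0, shiftQuot_mk, shift_g0]

theorem shiftEquiv_T [DecidableEq I] (a : I → ZMod N) (i j : I) (α : ZMod N) :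
    shiftEquiv a (T K I N i j α) = T K I N i j (α + (a i - a j)) := by
  unfold T
  split_ifs with h
  · rw [shiftEquiv_apply, shiftQuot_mk, shift_g]
  · exact map_zero _

end Cyc

open Cyc in
/-- The assignments `γ_i · t_{0p} = t_{0p}`, `γ_i · t_{qr}^α = t_{qr}^α`
(`q, r ≠ i`), `γ_i · t_{ir}^α = t_{ir}^{α+γ}`, `γ_i · t_{qi}^α = t_{qi}^{α-γ}` define an
action of the group `Γ^I` on `t_I^Γ(k)` by Lie algebra automorphisms, i.e., a group
homomorphism `Γ^I → Aut(t_I^Γ(k))`. -/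
theorem gamma_action_on_tGamma (K : Type) [Field K] [CharZero K] (N : ℕ) [NeZero N]
    (I : Type) [Fintype I] [DecidableEq I] :
    ∃ ρ : (I → ZMod N) → (Cyc.tGamma K I N ≃ₗ⁅K⁆ Cyc.tGamma K I N),
      -- `ρ` is a group homomorphism from `Γ^I` to automorphisms
      (∀ x : Cyc.tGamma K I N, ρ 0 x = x) ∧
      (∀ (a b : I → ZMod N) (x : Cyc.tGamma K I N), ρ (a + b) x = ρ a (ρ b x)) ∧
      -- values on generators, for `γ_i = Pi.single i γ`
      (∀ (γ : ZMod N) (i p : I), ρ (Pi.single i γ) (Cyc.T0 K I N p) = Cyc.T0 K I N p) ∧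
      (∀ (γ : ZMod N) (i q r : I), q ≠ i → r ≠ i → q ≠ r → ∀ α : ZMod N,
          ρ (Pi.single i γ) (Cyc.T K I N q r α) = Cyc.T K I N q r α) ∧
      (∀ (γ : ZMod N) (i r : I), r ≠ i → ∀ α : ZMod N,
          ρ (Pi.single i γ) (Cyc.T K I N i r α) = Cyc.T K I N i r (α + γ)) ∧
      (∀ (γ : ZMod N) (i q : I), q ≠ i → ∀ α : ZMod N,
          ρ (Pi.single i γ) (Cyc.T K I N q i α) = Cyc.T K I N q i (α - γ)) := by
  refine ⟨shiftEquiv, shiftQuot_zero, shiftQuot_add, fun γ i p => shiftEquiv_T0 _ p, ?_, ?_, ?_⟩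
  · intro γ i q r hq hr _ α
    rw [shiftEquiv_T, Pi.single_eq_of_ne hq, Pi.single_eq_of_ne hr, sub_zero, add_zero]
  · intro γ i r hr α
    rw [shiftEquiv_T, Pi.single_eq_same, Pi.single_eq_of_ne hr, sub_zero]
  · intro γ i q hq α
    rw [shiftEquiv_T, Pi.single_eq_same, Pi.single_eq_of_ne hq, zero_sub, ← sub_eq_add_neg]
end
end

section
/- Let N ≥ 1 and let I be a finite set. The map p : Conf(ℂ^×, I, Γ) → Conf(ℂ^×, I) given by p(z) = (z_i^N)_{i∈I} is a covering map (in the sense of IsCoveringMap), where both spaces carry the subspace topology from ℂ^I. -/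
/-!
The map `p` is the restriction, over `conf I`, of the coordinatewise power map `q` of `I → ℂ`:
for `N ≥ 1` one has `confGamma N I = q ⁻¹' (conf I)`, since two nonzero complex numbers have the
same `N`-th power exactly when they differ by an `N`-th root of unity. So it suffices that `q` is
a covering over `conf I`. A closed map with finite fibres that is a local homeomorphism over a
set is a covering over that set, and `q` has these properties: it is a finite product of the proper
maps `x ↦ x ^ N`, its fibres are finite products of sets of `N`-th roots, and `x ↦ x ^ N` is a local
homeomorphism away from `0`.
-/

/-!
STATEMENT 10: the coordinatewise `N`-th power map
`Conf(ℂ^×, I, Γ) → Conf(ℂ^×, I)` is a covering map.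
-/

/-- The configuration space of `ℂ^×`. -/
def conf (I : Type*) : Set (I → ℂ) :=
  {z | (∀ i, z i ≠ 0) ∧ ∀ i j, i ≠ j → z i ≠ z j}

/-- The `Γ`-twisted configuration space of `ℂ^×` (`Γ = ℤ/Nℤ`). -/
def confGamma (N : ℕ) (I : Type*) : Set (I → ℂ) :=
  {z | (∀ i, z i ≠ 0) ∧ ∀ i j, i ≠ j → ∀ ζ : ℂ, ζ ^ N = 1 → z i ≠ ζ * z j}

/-- The coordinatewise `N`-th power map `p : Conf(ℂ^×, I, Γ) → Conf(ℂ^×, I)`,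
`p(z) = (z_i^N)_{i∈I}`. -/
def powMap (N : ℕ) (I : Type*) (z : confGamma N I) : conf I :=
  ⟨fun i => (z : I → ℂ) i ^ N, by
    obtain ⟨h0, hd⟩ := z.2
    refine ⟨fun i => pow_ne_zero _ (h0 i), fun i j hij h => ?_⟩
    exact hd i j hij ((z : I → ℂ) i / (z : I → ℂ) j)
      (by
        have h' : (z : I → ℂ) i ^ N = (z : I → ℂ) j ^ N := h
        rw [div_pow, h', div_self (pow_ne_zero _ (h0 j))])
      (div_mul_cancel₀ ((z : I → ℂ) i) (h0 j)).symm⟩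

theorem isProperMap_coordPow (N : ℕ) (hN : 0 < N) (I : Type*) :
    IsProperMap (fun (z : I → ℂ) i => z i ^ N) := by
  have h : IsProperMap (fun x : ℂ => x ^ N) := by
    refine isProperMap_iff_isClosedMap_and_compact_fibers.mpr
      ⟨by fun_prop, isClosedMap_pow ℂ N, fun y => Set.Finite.isCompact ?_⟩
    exact (Polynomial.nthRoots N y).toFinset.finite_toSet.subset fun x hx => by
      simpa [Polynomial.mem_nthRoots hN] using hx
  exact IsProperMap.pi_map fun _ => h

theorem finite_coordPow_fiber (N : ℕ) (hN : 0 < N) (I : Type*) [Finite I] (w : I → ℂ) :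
    ((fun (z : I → ℂ) i => z i ^ N) ⁻¹' {w}).Finite := by
  refine (Set.Finite.pi' (t := fun i => ((Polynomial.nthRoots N (w i)).toFinset : Set ℂ))
    fun i => Finset.finite_toSet _).subset fun z hz i => ?_
  simpa [Polynomial.mem_nthRoots hN] using congrFun hz i

theorem isLocalHomeomorphOn_coordPow (N : ℕ) (hN : 0 < N) (I : Type*) [Finite I] :
    IsLocalHomeomorphOn (fun (z : I → ℂ) i => z i ^ N) {z | ∀ i, z i ≠ 0} := by
  have := Fintype.ofFinite I
  intro z hz
  have h := (isCoveringMapOn_npow (𝕜 := ℂ) N (by exact_mod_cast hN.ne')).isLocalHomeomorphOn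
  choose e he hf using fun i => h (z i) (pow_ne_zero N (hz i))
  refine ⟨OpenPartialHomeomorph.pi e, fun i _ => he i, ?_⟩
  funext x i
  exact congrFun (hf i) (x i)

/-- The twisted configuration space is the full preimage of `conf I`, so that `powMap` is the
restriction of the coordinatewise power map over `conf I`. -/
theorem preimage_conf (N : ℕ) (hN : 0 < N) (I : Type*) :
    (fun (z : I → ℂ) i => z i ^ N) ⁻¹' conf I = confGamma N I := by
  ext z
  refine ⟨fun ⟨h0, hd⟩ => ⟨fun i hi => h0 i ?_, fun i j hij ζ hζ h => hd i j hij ?_⟩,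
    fun hz => (powMap N I ⟨z, hz⟩).2⟩
  · simp [hi, hN.ne']
  · simp [h, mul_pow, hζ]

/-- For `N ≥ 1`, the coordinatewise `N`-th power map
`Conf(ℂ^×, I, Γ) → Conf(ℂ^×, I)` is a covering map (both spaces carrying the subspace
topology from `ℂ^I`). -/
theorem powMap_isCoveringMap (N : ℕ) (hN : 0 < N) (I : Type*) [Fintype I] :
    IsCoveringMap (powMap N I) := by
  have hcov : IsCoveringMapOn (fun (z : I → ℂ) i => z i ^ N) (conf I) := by
    refine (isProperMap_coordPow N hN I).isClosedMap.isCoveringMapOn_of_isLocalHomeomorphOn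
      (fun w _ => finite_coordPow_fiber N hN I w)
      ((isLocalHomeomorphOn_coordPow N hN I).mono ?_)
    rw [preimage_conf N hN I]
    exact fun z hz => hz.1
  exact hcov.isCoveringMap_restrictPreimage.comp_homeomorph
    (.setCongr (preimage_conf N hN I).symm)
end
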